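/- Let m ≥ 2, let μ be a σ-finite measure on ℝ^d \ {0}, and let H : ℝ^d → ℝ^{n×n} and h : ℝ^d → ℝ^n be measurable functions with ∫ ( ‖H(y)‖^k + ‖h(y)‖^k ) μ(dy) < ∞ for every integer 1 ≤ k ≤ m. Then for every real polynomial f in n variables of total degree ≤ m and every x ∈ ℝ^n, the function y ↦ f(x + H(y)x + h(y)) − f(x) − Σ_{k=1}^n (H(y)x + h(y))_k (∂_k f)(x) is μ-integrable, and the map x ↦ ∫ ( f(x + H(y)x + h(y)) − f(x) − Σ_{k=1}^n (H(y)x + h(y))_k (∂_k f)(x) ) μ(dy) agrees with a polynomial of total degree ≤ m. -/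

import Mathlib

/-!
The integrand is a finite sum of terms `c y * p x`, with `p` a polynomial of degree `≤ m` and
`c` a measurable coefficient satisfying `|c y| ≤ (‖H y‖ + ‖h y‖) ^ k` for some `1 ≤ k ≤ m`. Each
such `c` is integrable by the moment condition of order `k`, and integrating in `y` turns
`c y * p x` into `(∫ c) * p x`, a polynomial in `x` of degree `≤ m`.

`jumpSpan N l q` is the span of the terms with `l ≤ k ≤ q` and `deg p ≤ q`. These spans are
multiplicative, `jumpSpan N l q * jumpSpan N l' q' ⊆ jumpSpan N (l + l') (q + q')`. The jump
components `u i = (H y x + h y) i` lie in `jumpSpan N 1 1` and polynomials of degree `≤ q` in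
`jumpSpan N 0 q`. The first difference of a monomial then lies in `jumpSpan N 1 q` by the Leibniz
identity `(x i + u i) P' - x i P = (P' - P) (x i + u i) + u i P`, and so does each gradient term
`u k * ∂ₖ f`. Since first moments are finite, the difference and the gradient term are integrable
separately, so no second-order cancellation is needed.
-/


open MeasureTheory MvPolynomial

attribute [local instance] Matrix.normedAddCommGroup

/-- Entrywise measurable structure on real matrices. -/
local instance matrixMeasurableSpace (n₁ n₂ : ℕ) :
    MeasurableSpace (Matrix (Fin n₁) (Fin n₂) ℝ) :=
  inferInstanceAs (MeasurableSpace (Fin n₁ → Fin n₂ → ℝ))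

/-- Functions `(y, x) ↦ c y * p x` with `p` a polynomial of degree at most `q` and `c` measurable
and bounded by `N ^ k` for some `l ≤ k ≤ q`. -/
def jumpTerms {Y : Type*} [MeasurableSpace Y] {n : ℕ} (N : Y → ℝ) (l q : ℕ) :
    Set (Y → (Fin n → ℝ) → ℝ) :=
  {F | ∃ (c : Y → ℝ) (p : MvPolynomial (Fin n) ℝ) (k : ℕ), Measurable c ∧
    (∀ y, |c y| ≤ N y ^ k) ∧ l ≤ k ∧ k ≤ q ∧ p.totalDegree ≤ q ∧
    F = fun y x => c y * eval x p}

/-- The linear span of `jumpTerms`. -/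
def jumpSpan {Y : Type*} [MeasurableSpace Y] {n : ℕ} (N : Y → ℝ) (l q : ℕ) :
    Submodule ℝ (Y → (Fin n → ℝ) → ℝ) :=
  Submodule.span ℝ (jumpTerms N l q)

section jumpSpan

variable {Y : Type*} [MeasurableSpace Y] {n : ℕ} {N : Y → ℝ}

lemma jumpSpan_mono {l q q' : ℕ} (hq : q ≤ q') :
    jumpSpan (n := n) N l q ≤ jumpSpan N l q' := by
  apply Submodule.span_mono
  rintro F ⟨c, p, k, hc, hb, h1, h2, h3, rfl⟩
  exact ⟨c, p, k, hc, hb, h1, h2.trans hq, h3.trans hq, rfl⟩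

lemma jumpSpan_le_zero {l q : ℕ} :
    jumpSpan (n := n) N l q ≤ jumpSpan N 0 q := by
  apply Submodule.span_mono
  rintro F ⟨c, p, k, hc, hb, h1, h2, h3, rfl⟩
  exact ⟨c, p, k, hc, hb, Nat.zero_le _, h2, h3, rfl⟩

lemma mul_mem_jumpSpan {l l' q q' : ℕ} {F G : Y → (Fin n → ℝ) → ℝ}
    (hF : F ∈ jumpSpan N l q) (hG : G ∈ jumpSpan N l' q') :
    F * G ∈ jumpSpan N (l + l') (q + q') := by
  have h := Submodule.mul_mem_mul hF hG
  rw [jumpSpan, jumpSpan, Submodule.span_mul_span] at h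
  refine Submodule.span_mono ?_ h
  rintro _ ⟨_, ⟨c, p, k, hc, hb, h1, h2, h3, rfl⟩, _, ⟨c', p', k', hc', hb', h1', h2', h3', rfl⟩,
    rfl⟩
  refine ⟨c * c', p * p', k + k', hc.mul hc', fun y => ?_, by lia, by lia,
    (totalDegree_mul _ _).trans (by lia), ?_⟩
  · rw [Pi.mul_apply, abs_mul, pow_add]
    exact mul_le_mul (hb y) (hb' y) (abs_nonneg _) ((abs_nonneg _).trans (hb y))
  · funext y x
    simp only [Pi.mul_apply, map_mul]
    ring

lemma eval_mem_jumpSpan {q : ℕ} {p : MvPolynomial (Fin n) ℝ} (hp : p.totalDegree ≤ q) :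
    (fun _ x => eval x p) ∈ jumpSpan N 0 q :=
  Submodule.subset_span ⟨fun _ => 1, p, 0, measurable_const, by simp, le_rfl, Nat.zero_le _, hp,
    by simp⟩

/-- The first difference of a monomial, written as a product over a multiset of variables: if
every component of the jump `u` is in `jumpSpan N 1 1`, each factor contributes one degree. -/
lemma prod_sub_prod_mem_jumpSpan {u : Fin n → Y → (Fin n → ℝ) → ℝ}
    (hu : ∀ i, u i ∈ jumpSpan N 1 1) (t : Multiset (Fin n)) :
    (fun y x => (t.map fun i => x i + u i y x).prod - (t.map fun i => x i).prod) ∈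
      jumpSpan N 1 t.card := by
  induction t using Multiset.induction_on with
  | empty =>
    convert Submodule.zero_mem _ using 1
    funext y x
    simp
  | cons i t ih =>
    have hX : (fun _ x => x i) ∈ jumpSpan (n := n) N 0 1 := by
      simpa using eval_mem_jumpSpan (N := N) (p := (X i : MvPolynomial (Fin n) ℝ))
        (totalDegree_X i).le
    have hP : (fun _ x => (t.map fun i => x i).prod) ∈ jumpSpan (n := n) N 0 t.card := by
      have hd : ((t.map fun i => (X i : MvPolynomial (Fin n) ℝ)).prod).totalDegree ≤ t.card := by
        refine (totalDegree_multiset_prod _).trans ?_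
        simp [Multiset.map_map, totalDegree_X]
      have := eval_mem_jumpSpan (N := N) hd
      simpa [map_multiset_prod, Multiset.map_map, Function.comp_def] using this
    have h1 := mul_mem_jumpSpan ih (Submodule.add_mem _ hX (jumpSpan_le_zero (hu i)))
    have h2 := mul_mem_jumpSpan (hu i) hP
    rw [add_comm 1 t.card] at h2
    rw [Multiset.card_cons]
    convert Submodule.add_mem _ h1 h2 using 1
    funext y x
    simp only [Multiset.map_cons, Multiset.prod_cons, Pi.add_apply, Pi.mul_apply]
    ring

lemma eval_sub_eval_mem_jumpSpan {u : Fin n → Y → (Fin n → ℝ) → ℝ}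
    (hu : ∀ i, u i ∈ jumpSpan N 1 1) {m : ℕ} {f : MvPolynomial (Fin n) ℝ}
    (hf : f.totalDegree ≤ m) :
    (fun y x => eval (fun i => x i + u i y x) f - eval x f) ∈ jumpSpan N 1 m := by
  have key : (fun y x => eval (fun i => x i + u i y x) f - eval x f) =
      ∑ s ∈ f.support, f.coeff s • fun y x =>
        (s.toMultiset.map fun i => x i + u i y x).prod - (s.toMultiset.map fun i => x i).prod := by
    have hm : ∀ (s : Fin n →₀ ℕ) (z : Fin n → ℝ),
        (s.toMultiset.map fun i => z i).prod = ∏ i, z i ^ s i := by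
      intro s z
      rw [Finsupp.toMultiset_map, Finsupp.prod_toMultiset, Finsupp.prod_mapDomain_index (by simp)
        (by intros; rw [pow_add]), Finsupp.prod_fintype _ _ (by simp)]
    funext y x
    simp only [Finset.sum_apply, Pi.smul_apply, hm, smul_eq_mul, mul_sub, Finset.sum_sub_distrib,
      eval_eq']
  rw [key]
  refine Submodule.sum_mem _ fun s hs => Submodule.smul_mem _ _ ?_
  refine jumpSpan_mono ?_ (prod_sub_prod_mem_jumpSpan hu s.toMultiset)
  rw [Finsupp.card_toMultiset]
  exact (le_totalDegree hs).trans hf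

/-- Integrating out `y` maps the span into polynomials of degree at most `q`, provided that every
measurable function dominated by a power `N ^ k` with `l ≤ k ≤ q` is integrable. -/
lemma integral_of_mem_jumpSpan {μ : Measure Y} {l q : ℕ}
    (hN : ∀ (c : Y → ℝ) (k : ℕ), Measurable c → (∀ y, |c y| ≤ N y ^ k) → l ≤ k → k ≤ q →
      Integrable c μ)
    {F : Y → (Fin n → ℝ) → ℝ} (hF : F ∈ jumpSpan N l q) :
    (∀ x, Integrable (fun y => F y x) μ) ∧
      ∃ g : MvPolynomial (Fin n) ℝ, g.totalDegree ≤ q ∧ ∀ x, eval x g = ∫ y, F y x ∂μ := by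
  induction hF using Submodule.span_induction with
  | mem F h =>
    obtain ⟨c, p, k, hc, hb, h1, h2, h3, rfl⟩ := h
    refine ⟨fun x => (hN c k hc hb h1 h2).mul_const _, C (∫ y, c y ∂μ) * p, ?_, fun x => ?_⟩
    · exact (totalDegree_mul _ _).trans (by simpa using h3)
    · rw [integral_mul_const, map_mul, eval_C]
  | zero => exact ⟨fun x => by simp, 0, by simp, by simp⟩
  | add F G _ _ hF hG =>
    obtain ⟨hF, f, hf, hf'⟩ := hF
    obtain ⟨hG, g, hg, hg'⟩ := hG
    refine ⟨fun x => (hF x).add (hG x), f + g,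
      (totalDegree_add _ _).trans (max_le hf hg), fun x => ?_⟩
    simp only [Pi.add_apply]
    rw [integral_add (hF x) (hG x), map_add, hf', hg']
  | smul a F _ hF =>
    obtain ⟨hF, f, hf, hf'⟩ := hF
    refine ⟨fun x => (hF x).const_mul a, a • f, (totalDegree_smul_le _ _).trans hf, fun x => ?_⟩
    simp only [Pi.smul_apply, smul_eq_mul]
    rw [integral_const_mul, smul_eval, hf']

end jumpSpan

lemma totalDegree_pderiv_le_pred {n : ℕ} (k : Fin n) (f : MvPolynomial (Fin n) ℝ) :
    (pderiv k f).totalDegree ≤ f.totalDegree - 1 := by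
  conv_lhs => rw [f.as_sum, map_sum]
  refine totalDegree_finsetSum_le fun s hs => ?_
  rw [pderiv_monomial]
  by_cases hsk : s k = 0
  · simp [hsk]
  refine (totalDegree_monomial_le _ _).trans ?_
  have h1 : (s - Finsupp.single k 1).degree + 1 = s.degree := by
    conv_rhs => rw [← tsub_add_cancel_of_le
      (Finsupp.single_le_iff.2 (Nat.one_le_iff_ne_zero.2 hsk))]
    simp
  have h2 : s.degree ≤ f.totalDegree := le_totalDegree hs
  change (s - Finsupp.single k 1).degree ≤ _
  lia

/-- The key claim in the proof of Theorem 3.5 under Condition B: for a jump kernel which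
is the pushforward of a measure `μ` on `ℝ^d` under the state-affine map
`y ↦ H(y)x + h(y)`, with moment conditions `∫ (‖H(y)‖^k + ‖h(y)‖^k) μ(dy) < ∞` for
`1 ≤ k ≤ m`, the jump part of the generator is well defined on polynomials of total
degree `≤ m` and maps them into polynomials of total degree `≤ m`. -/
theorem generator_conditionB_polynomial (n d m : ℕ) (hm : 2 ≤ m)
    (μ : Measure (Fin d → ℝ)) [SigmaFinite μ] (h0 : μ {0} = 0)
    (H : (Fin d → ℝ) → Matrix (Fin n) (Fin n) ℝ) (hHmeas : Measurable H)
    (h : (Fin d → ℝ) → (Fin n → ℝ)) (hhmeas : Measurable h)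
    (hmom : ∀ k : ℕ, 1 ≤ k → k ≤ m →
      (∫⁻ y, ENNReal.ofReal (‖H y‖ ^ k + ‖h y‖ ^ k) ∂μ) < ⊤)
    (f : MvPolynomial (Fin n) ℝ) (hf : f.totalDegree ≤ m) :
    (∀ x : Fin n → ℝ,
      Integrable (fun y : Fin d → ℝ =>
        eval (x + ((H y).mulVec x + h y)) f - eval x f -
          ∑ k, ((H y).mulVec x + h y) k * eval x (pderiv k f)) μ) ∧
    (∃ g : MvPolynomial (Fin n) ℝ, g.totalDegree ≤ m ∧
      ∀ x : Fin n → ℝ,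
        eval x g =
          ∫ y, (eval (x + ((H y).mulVec x + h y)) f - eval x f -
            ∑ k, ((H y).mulVec x + h y) k * eval x (pderiv k f)) ∂μ) := by
  set N : (Fin d → ℝ) → ℝ := fun y => ‖H y‖ + ‖h y‖ with hN
  set u : Fin n → (Fin d → ℝ) → (Fin n → ℝ) → ℝ := fun i y x => ((H y).mulVec x + h y) i with hu
  have hHij : ∀ i j, Measurable fun y => H y i j := fun i j =>
    (measurable_pi_apply j).comp ((measurable_pi_apply (X := fun _ => Fin n → ℝ) i).comp hHmeas)
  have hint : ∀ (c : (Fin d → ℝ) → ℝ) (k : ℕ), Measurable c → (∀ y, |c y| ≤ N y ^ k) →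
      1 ≤ k → k ≤ m → Integrable c μ := by
    intro c k hc hb h1 h2
    refine ⟨hc.aestronglyMeasurable, ?_⟩
    have hfin : HasFiniteIntegral (fun y => ‖H y‖ ^ k + ‖h y‖ ^ k) μ := by
      rw [hasFiniteIntegral_iff_ofReal (Filter.Eventually.of_forall fun y => by positivity)]
      exact hmom k h1 h2
    refine (hfin.const_mul (2 ^ (k - 1))).mono' (Filter.Eventually.of_forall fun y => ?_)
    exact (hb y).trans (add_pow_le (norm_nonneg _) (norm_nonneg _) k)
  have hu1 : ∀ i, u i ∈ jumpSpan N 1 1 := by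
    intro i
    have : u i = ∑ j, (fun y x => H y i j * eval x (X j)) + fun y x => h y i * eval x 1 := by
      funext y x
      simp [hu, Matrix.mulVec, dotProduct, Finset.sum_apply]
    rw [this]
    refine Submodule.add_mem _ (Submodule.sum_mem _ fun j _ => Submodule.subset_span ?_)
      (Submodule.subset_span ?_)
    · refine ⟨_, X j, 1, hHij i j, fun y => ?_, le_rfl, le_rfl, (totalDegree_X j).le, rfl⟩
      have := Matrix.norm_entry_le_entrywise_sup_norm (H y) (i := i) (j := j)
      rw [Real.norm_eq_abs] at this
      simpa [hN] using this.trans (le_add_of_nonneg_right (norm_nonneg (h y)))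
    · refine ⟨_, 1, 1, (measurable_pi_apply i).comp hhmeas, fun y => ?_, le_rfl, le_rfl,
        by simp, rfl⟩
      have := norm_le_pi_norm (h y) i
      rw [Real.norm_eq_abs] at this
      simpa [hN] using this.trans (le_add_of_nonneg_left (norm_nonneg (H y)))
  have hgrad : ∀ k, (u k * fun _ x => eval x (pderiv k f)) ∈ jumpSpan N 1 m := by
    intro k
    have := mul_mem_jumpSpan (hu1 k) (eval_mem_jumpSpan (N := N)
      ((totalDegree_pderiv_le_pred k f).trans (Nat.sub_le_sub_right hf 1)))
    rwa [add_zero, Nat.add_sub_cancel' (by lia : 1 ≤ m)] at this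
  have hmem := Submodule.sub_mem _ (eval_sub_eval_mem_jumpSpan hu1 hf)
    (Submodule.sum_mem _ fun k (_ : k ∈ Finset.univ) => hgrad k)
  have hres := integral_of_mem_jumpSpan hint hmem
  simp only [Pi.sub_apply, Finset.sum_apply, Pi.mul_apply] at hres
  exact hres
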